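/- Let d ∈ {1, 2} and let x, y ∈ ℤ^d with y ≠ 0, x ≠ 0 and x ≠ y. Then lim_{λ→0+} (G_λ(x, y) G_λ(0, 0) - G_λ(0, x) G_λ(0, y)) / (G_λ(0, 0)² - G_λ(0, y)²) = (ρ_d(x) + ρ_d(y) - ρ_d(y - x)) / (2 ρ_d(y)). (This limit is the total mass H_{x,y,0}(∞) of the taboo hitting-time distribution, since the quotient is its Laplace–Stieltjes transform.) -/

import Mathlib

/-!
By Fubini, `G_λ(x, y) = (2π)^{-d} ∫ cos ⟨y - x, θ⟩ / (λ - φ(θ)) dθ`. As `λ → 0+` two things happen.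

* `G_λ(0, 0) → ∞`: finite variance gives `-φ(θ) ≤ C ‖θ‖²`, and `‖θ‖⁻²` is not integrable near `0`
  in dimension at most two, so Fatou's lemma applies.
* `G_λ(0, 0) - G_λ(x, y)` nevertheless converges to the potential kernel at `y - x`. Indeed
  `1 - cos ⟨w, θ⟩ ≤ C_w (-φ(θ))` holds for `w` a jump, since each jump contributes a nonnegative
  term to `-φ`, and is inherited by sums because
  `1 - cos (u + v) ≤ 2 (1 - cos u) + 2 (1 - cos v)`; hence it holds for every `w` in the group
  generated by the jumps, and dominated convergence applies.

Writing `g = G_λ(0, 0)` and `p`, `q`, `s` for the differences `g - G_λ(0, x)`, `g - G_λ(0, y)`,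
`g - G_λ(x, y)`, the quotient is `((g - s) g - (g - p) (g - q)) / (g² - (g - q)²)`; dividing
numerator and denominator by `g → ∞` leaves `(p + q - s) / (2 q)` in the limit.
-/

open MeasureTheory Real Filter Topology Asymptotics

/-- Fourier symbol `φ(θ) = ∑_z a(z) cos⟨z,θ⟩` of the random walk on `ℤ^d`. -/
noncomputable def phiSymb (d : ℕ) (a : (Fin d → ℤ) → ℝ) (θ : Fin d → ℝ) : ℝ :=
  ∑' z : Fin d → ℤ, a z * Real.cos (∑ i, (z i : ℝ) * θ i)

/-- Transition probability `p(t;x,y) = (2π)^{-d} ∫_{[-π,π]^d} e^{φ(θ)t} cos⟨θ,y-x⟩ dθ`. -/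
noncomputable def ptrans (d : ℕ) (a : (Fin d → ℤ) → ℝ) (t : ℝ) (x y : Fin d → ℤ) : ℝ :=
  ((2 * π) ^ d)⁻¹ *
    ∫ θ in Set.Icc (fun _ : Fin d => -π) (fun _ : Fin d => π),
      Real.exp (phiSymb d a θ * t) * Real.cos (∑ i, θ i * ((y i : ℝ) - (x i : ℝ)))

/-- Laplace transform `G_λ(x,y) = ∫_0^∞ e^{-λt} p(t;x,y) dt` (Green's function at `λ = 0`). -/
noncomputable def Glam (d : ℕ) (a : (Fin d → ℤ) → ℝ) (lam : ℝ) (x y : Fin d → ℤ) : ℝ :=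
  ∫ t in Set.Ioi (0 : ℝ), Real.exp (-lam * t) * ptrans d a t x y

/-- Hessian matrix `φ''(0)`, with entries `-∑_z a(z) z_i z_j`. -/
noncomputable def hessPhi (d : ℕ) (a : (Fin d → ℤ) → ℝ) : Matrix (Fin d) (Fin d) ℝ :=
  Matrix.of fun i j => -∑' z : Fin d → ℤ, a z * (z i : ℝ) * (z j : ℝ)

/-- `γ_d = (2π)^{-d/2} |det φ''(0)|^{-1/2}`. -/
noncomputable def gammaConst (d : ℕ) (a : (Fin d → ℤ) → ℝ) : ℝ :=
  ((2 * π) ^ ((d : ℝ) / 2))⁻¹ * (Real.sqrt |(hessPhi d a).det|)⁻¹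

/-- `ρ_d(x) = (a/(2π)^d) ∫_{[-π,π]^d} (cos⟨x,θ⟩ - 1)/φ(θ) dθ` for `x ≠ 0`, and `ρ_d(0) = 1`. -/
noncomputable def rhoConst (d : ℕ) (a : (Fin d → ℤ) → ℝ) (x : Fin d → ℤ) : ℝ :=
  if x = 0 then 1 else
    (-(a 0) / (2 * π) ^ d) *
      ∫ θ in Set.Icc (fun _ : Fin d => -π) (fun _ : Fin d => π),
        (Real.cos (∑ i, (x i : ℝ) * θ i) - 1) / phiSymb d a θ

/-- `γ̃_d(z) = (1/(2(2π)^d)) ∫_{ℝ^d} ⟨v,z⟩² e^{⟨φ''(0)v,v⟩/2} dv`. -/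
noncomputable def gammaTilde (d : ℕ) (a : (Fin d → ℤ) → ℝ) (z : Fin d → ℤ) : ℝ :=
  (2 * (2 * π) ^ d)⁻¹ *
    ∫ v : Fin d → ℝ, (∑ i, v i * (z i : ℝ)) ^ 2 *
      Real.exp ((∑ i, (hessPhi d a).mulVec v i * v i) / 2)

section MultiplicationResolvent

variable {X : Type*} [MeasurableSpace X] {μ : Measure X} {f g : X → ℝ} {lam : ℝ}

lemma integrable_div_sub_of_nonpos (hf : Measurable f) (hf0 : ∀ x, f x ≤ 0)
    (hg : Integrable g μ) (hlam : 0 < lam) :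
    Integrable (fun x => g x / (lam - f x)) μ := by
  refine (hg.norm.div_const lam).mono'
    (hg.aemeasurable.div (measurable_const.sub hf).aemeasurable).aestronglyMeasurable
    (ae_of_all _ fun x => ?_)
  have hle : lam ≤ lam - f x := by linarith [hf0 x]
  rw [norm_div, Real.norm_of_nonneg (hlam.le.trans hle)]
  exact div_le_div_of_nonneg_left (norm_nonneg _) hlam hle

lemma integral_exp_neg_mul_mul_exp_mul_Ioi {b : ℝ} (hb : b < lam) (c : ℝ) :
    ∫ t in Set.Ioi (0 : ℝ), exp (-lam * t) * (exp (b * t) * c) = c / (lam - b) := by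
  have hexp (t : ℝ) : exp (-lam * t) * (exp (b * t) * c) = exp ((b - lam) * t) * c := by
    rw [← mul_assoc, ← exp_add]
    ring_nf
  simp only [hexp]
  rw [integral_mul_const, integral_exp_mul_Ioi (sub_neg.2 hb), mul_zero, exp_zero,
    ← neg_sub lam, neg_div_neg_eq, one_div_mul_eq_div]

lemma integral_exp_neg_mul_integral_exp_mul [SFinite μ] (hf : Measurable f)
    (hf0 : ∀ x, f x ≤ 0) (hg : Integrable g μ) (hlam : 0 < lam) :
    ∫ t in Set.Ioi (0 : ℝ), exp (-lam * t) * (∫ x, exp (f x * t) * g x ∂μ) =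
      ∫ x, g x / (lam - f x) ∂μ := by
  have hint : Integrable (Function.uncurry fun t x => exp (-lam * t) * (exp (f x * t) * g x))
      ((volume.restrict (Set.Ioi (0 : ℝ))).prod μ) := by
    have hdom : Integrable (fun q : ℝ × X => exp (-lam * q.1) * ‖g q.2‖)
        ((volume.restrict (Set.Ioi (0 : ℝ))).prod μ) :=
      (exp_neg_integrableOn_Ioi 0 hlam).integrable.mul_prod hg.norm
    refine hdom.mono' ?_ ?_
    · exact Measurable.aestronglyMeasurable (by fun_prop) |>.mul
        (Measurable.aestronglyMeasurable (by fun_prop) |>.mul hg.aestronglyMeasurable.comp_snd)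
    · filter_upwards [Measure.quasiMeasurePreserving_fst.ae (ae_restrict_mem measurableSet_Ioi)]
        with q hq
      have hexp : exp (f q.2 * q.1) ≤ 1 :=
        exp_le_one_iff.2 (mul_nonpos_of_nonpos_of_nonneg (hf0 _) (le_of_lt hq))
      simp only [Function.uncurry_def, norm_mul, Real.norm_eq_abs, abs_exp]
      gcongr
      exact mul_le_of_le_one_left (abs_nonneg _) hexp
  calc ∫ t in Set.Ioi (0 : ℝ), exp (-lam * t) * (∫ x, exp (f x * t) * g x ∂μ)
      = ∫ t in Set.Ioi (0 : ℝ), ∫ x, exp (-lam * t) * (exp (f x * t) * g x) ∂μ := by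
        simp only [integral_const_mul]
    _ = ∫ x, (∫ t in Set.Ioi (0 : ℝ), exp (-lam * t) * (exp (f x * t) * g x)) ∂μ :=
        integral_integral_swap hint
    _ = ∫ x, g x / (lam - f x) ∂μ := by
        simp only [integral_exp_neg_mul_mul_exp_mul_Ioi ((hf0 _).trans_lt hlam)]

lemma tendsto_integral_div_sub (hf : Measurable f) (hf0 : ∀ x, f x ≤ 0)
    (hg : AEStronglyMeasurable g μ) (hgf : ∀ x, f x = 0 → g x = 0)
    (hint : Integrable (fun x => g x / -f x) μ) :
    Tendsto (fun lam => ∫ x, g x / (lam - f x) ∂μ) (𝓝[>] 0) (𝓝 (∫ x, g x / -f x ∂μ)) := by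
  refine tendsto_integral_filter_of_dominated_convergence _ (.of_forall fun lam => ?_) ?_
    hint.norm (ae_of_all _ fun x => ?_)
  · exact (hg.aemeasurable.div (measurable_const.sub hf).aemeasurable).aestronglyMeasurable
  · filter_upwards [self_mem_nhdsWithin] with lam (hlam : 0 < lam)
    refine ae_of_all _ fun x => ?_
    rcases (hf0 x).eq_or_lt with h0 | hneg
    · simp [hgf x h0]
    · rw [norm_div, norm_div, Real.norm_of_nonneg (by linarith : 0 ≤ lam - f x),
        Real.norm_of_nonneg (by linarith : 0 ≤ -f x)]
      exact div_le_div_of_nonneg_left (norm_nonneg _) (neg_pos.2 hneg) (by linarith)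
  · rcases (hf0 x).eq_or_lt with h0 | hneg
    · simp [hgf x h0]
    · rw [← zero_sub]
      exact tendsto_const_nhds.div (tendsto_nhdsWithin_of_tendsto_nhds tendsto_id |>.sub_const _)
        (by linarith)

lemma tendsto_lintegral_inv_ofReal_sub (hf : Measurable f)
    (htop : ∫⁻ x, (ENNReal.ofReal (-f x))⁻¹ ∂μ = ⊤) :
    Tendsto (fun lam => ∫⁻ x, (ENNReal.ofReal (lam - f x))⁻¹ ∂μ) (𝓝[>] 0) (𝓝 ⊤) := by
  have hpt (x : X) : Tendsto (fun lam => (ENNReal.ofReal (lam - f x))⁻¹) (𝓝[>] (0 : ℝ))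
      (𝓝 (ENNReal.ofReal (-f x))⁻¹) := by
    have hcont : Continuous fun lam => (ENNReal.ofReal (lam - f x))⁻¹ :=
      (ENNReal.continuous_ofReal.comp (continuous_id.sub continuous_const)).inv
    simpa using (hcont.tendsto 0).mono_left nhdsWithin_le_nhds
  have hfatou := lintegral_liminf_le (μ := μ) (u := 𝓝[>] (0 : ℝ))
    (f := fun lam x => (ENNReal.ofReal (lam - f x))⁻¹) fun lam => by fun_prop
  simp only [fun x => (hpt x).liminf_eq, htop] at hfatou
  exact tendsto_of_le_liminf_of_limsup_le hfatou le_top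

lemma tendsto_integral_one_div_sub_atTop [IsFiniteMeasure μ] (hf : Measurable f)
    (hf0 : ∀ x, f x ≤ 0) (htop : ∫⁻ x, (ENNReal.ofReal (-f x))⁻¹ ∂μ = ⊤) :
    Tendsto (fun lam => ∫ x, 1 / (lam - f x) ∂μ) (𝓝[>] 0) atTop := by
  refine ENNReal.tendsto_ofReal_nhds_top.1 ((tendsto_lintegral_inv_ofReal_sub hf htop).congr' ?_)
  filter_upwards [self_mem_nhdsWithin] with lam (hlam : 0 < lam)
  have hden (x : X) : 0 < lam - f x := by linarith [hf0 x]
  rw [ofReal_integral_eq_lintegral_ofReal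
    (integrable_div_sub_of_nonpos hf hf0 (integrable_const 1) hlam)
    (ae_of_all _ fun x => (one_div_pos.2 (hden x)).le)]
  simp only [one_div, ENNReal.ofReal_inv_of_pos (hden _)]

end MultiplicationResolvent

section RadialSingularity

variable {E : Type*} [NormedAddCommGroup E] [NormedSpace ℝ E] [FiniteDimensional ℝ E]
  [Nontrivial E] [MeasurableSpace E] [BorelSpace E] {μ : Measure E} [μ.IsAddHaarMeasure] {r : ℝ}

lemma integrableOn_ball_norm_rpow_iff (hr : 0 < r) {s : ℝ} :
    IntegrableOn (fun x : E => ‖x‖ ^ s) (Metric.ball 0 r) μ ↔ -(Module.finrank ℝ E : ℝ) < s := by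
  have hrpow : Set.EqOn (fun t : ℝ => t ^ (Module.finrank ℝ E - 1) • t ^ s)
      (fun t => t ^ ((Module.finrank ℝ E : ℝ) - 1 + s)) (Set.Ioo 0 r) := fun t ht => by
    simp only [smul_eq_mul]
    rw [rpow_add ht.1, ← Nat.cast_pred Module.finrank_pos, rpow_natCast]
  rw [integrableOn_fun_norm_addHaar μ (f := fun t => t ^ s),
    integrableOn_congr_fun hrpow measurableSet_Ioo,
    intervalIntegral.integrableOn_Ioo_rpow_iff hr]
  constructor <;> intro h <;> linarith

lemma lintegral_ball_inv_enorm_rpow_eq_top (hr : 0 < r) {s : ℝ}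
    (hs : (Module.finrank ℝ E : ℝ) ≤ s) :
    ∫⁻ x in Metric.ball (0 : E) r, (‖x‖ₑ ^ s)⁻¹ ∂μ = ⊤ := by
  by_contra hfin
  have hle (x : E) : ‖‖x‖ ^ (-s)‖ₑ ≤ (‖x‖ₑ ^ s)⁻¹ := by
    rw [Real.enorm_of_nonneg (by positivity), rpow_neg (norm_nonneg x), ← ofReal_norm,
      ENNReal.ofReal_rpow_of_nonneg (norm_nonneg x) ((Nat.cast_nonneg _).trans hs)]
    exact ENNReal.ofReal_inv_le
  have hint : IntegrableOn (fun x : E => ‖x‖ ^ (-s)) (Metric.ball 0 r) μ :=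
    ⟨(measurable_norm.pow_const _).aestronglyMeasurable,
      (lintegral_mono hle).trans_lt (lt_top_iff_ne_top.2 hfin)⟩
  linarith [(integrableOn_ball_norm_rpow_iff hr).1 hint]

end RadialSingularity

section LatticePairing

variable {d : ℕ}

/-- The pairing `⟨w, θ⟩` of a lattice point with a frequency. -/
noncomputable def latticePairing (w : Fin d → ℤ) (θ : Fin d → ℝ) : ℝ :=
  ∑ i, (w i : ℝ) * θ i

@[fun_prop]
lemma continuous_latticePairing (w : Fin d → ℤ) : Continuous (latticePairing w) := by
  unfold latticePairing
  fun_prop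

@[simp]
lemma latticePairing_zero (θ : Fin d → ℝ) : latticePairing 0 θ = 0 := by
  simp [latticePairing]

lemma latticePairing_neg (w : Fin d → ℤ) (θ : Fin d → ℝ) :
    latticePairing (-w) θ = -latticePairing w θ := by
  simp [latticePairing]

lemma latticePairing_add (v w : Fin d → ℤ) (θ : Fin d → ℝ) :
    latticePairing (v + w) θ = latticePairing v θ + latticePairing w θ := by
  simp [latticePairing, add_mul, Finset.sum_add_distrib]

lemma latticePairing_single (w : Fin d → ℤ) (i : Fin d) (t : ℝ) :
    latticePairing w (Pi.single i t) = w i * t := by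
  simp [latticePairing, Pi.single_apply]

lemma sq_latticePairing_le (w : Fin d → ℤ) (θ : Fin d → ℝ) :
    latticePairing w θ ^ 2 ≤ (∑ i, (w i : ℝ) ^ 2) * (d * ‖θ‖ ^ 2) := by
  have hθ : ∑ i, θ i ^ 2 ≤ d * ‖θ‖ ^ 2 := calc
    ∑ i, θ i ^ 2 ≤ ∑ _i : Fin d, ‖θ‖ ^ 2 :=
      Finset.sum_le_sum fun i _ => sq_le_sq.2 (by simpa using norm_le_pi_norm θ i)
    _ = d * ‖θ‖ ^ 2 := by simp
  exact (Finset.sum_mul_sq_le_sq_mul_sq _ _ _).trans (by gcongr)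

/-- The Brillouin zone `[-π, π]^d`, the domain of the Fourier integrals. -/
abbrev brillouinZone (d : ℕ) : Set (Fin d → ℝ) :=
  Set.Icc (fun _ => -π) (fun _ => π)

instance isFiniteMeasure_restrict_brillouinZone :
    IsFiniteMeasure (volume.restrict (brillouinZone d)) :=
  isFiniteMeasure_restrict.2 isCompact_Icc.measure_lt_top.ne

lemma closedBall_zero_pi_eq_brillouinZone :
    Metric.closedBall (0 : Fin d → ℝ) π = brillouinZone d := by
  rw [closedBall_pi _ pi_nonneg, brillouinZone, ← Set.pi_univ_Icc]
  simp [Real.closedBall_eq_Icc]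

lemma ball_zero_pi_subset_brillouinZone : Metric.ball (0 : Fin d → ℝ) π ⊆ brillouinZone d :=
  closedBall_zero_pi_eq_brillouinZone (d := d) ▸ Metric.ball_subset_closedBall

lemma exists_mem_ball_cos_latticePairing_lt_one {w : Fin d → ℤ} (hw : w ≠ 0) :
    ∃ θ ∈ Metric.ball (0 : Fin d → ℝ) π, cos (latticePairing w θ) < 1 := by
  obtain ⟨i, hi : w i ≠ 0⟩ := Function.ne_iff.1 hw
  have habs : (1 : ℝ) ≤ |(w i : ℝ)| := by exact_mod_cast Int.one_le_abs hi
  refine ⟨Pi.single i (w i : ℝ)⁻¹, ?_, ?_⟩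
  · rw [mem_ball_zero_iff, Pi.norm_single, norm_inv, Real.norm_eq_abs]
    linarith [inv_le_one_of_one_le₀ habs, pi_gt_three]
  · rw [latticePairing_single, mul_inv_cancel₀ (by exact_mod_cast hi)]
    exact (cos_lt_cos_of_nonneg_of_le_pi_div_two le_rfl
      (by linarith [pi_gt_three]) one_pos).trans_eq cos_zero

lemma volume_brillouinZone_cos_latticePairing_lt_one_pos {w : Fin d → ℤ} (hw : w ≠ 0) :
    0 < volume ({θ | cos (latticePairing w θ) < 1} ∩ brillouinZone d) := by
  have hopen : IsOpen ({θ | cos (latticePairing w θ) < 1} ∩ Metric.ball (0 : Fin d → ℝ) π) :=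
    (isOpen_lt (by fun_prop) continuous_const).inter Metric.isOpen_ball
  obtain ⟨θ, hball, hcos⟩ := exists_mem_ball_cos_latticePairing_lt_one hw
  exact (hopen.measure_pos volume ⟨θ, hcos, hball⟩).trans_le
    (measure_mono (Set.inter_subset_inter_right _ ball_zero_pi_subset_brillouinZone))

end LatticePairing

section Symbol

variable {d : ℕ} {a : (Fin d → ℤ) → ℝ}

/-- `a` lists the rates of a translation-invariant continuous-time random walk on `ℤ^d`: jumps
by `z ≠ 0` occur at rate `a z ≥ 0`, and `a 0` is minus the total jump rate. -/
structure IsJumpRate (a : (Fin d → ℤ) → ℝ) : Prop where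
  nonneg : ∀ z, z ≠ 0 → 0 ≤ a z
  hasSum_zero : HasSum a 0

lemma norm_mul_cos_le (b u : ℝ) : ‖b * cos u‖ ≤ |b| := by
  rw [norm_mul]
  exact mul_le_of_le_one_right (abs_nonneg _) (abs_cos_le_one _)

lemma continuous_phiSymb (ha : Summable a) : Continuous (phiSymb d a) :=
  continuous_tsum (fun z => by fun_prop) ha.abs fun _ _ => norm_mul_cos_le _ _

lemma one_sub_cos_add_le (u v : ℝ) :
    1 - cos (u + v) ≤ 2 * (1 - cos u) + 2 * (1 - cos v) := by
  have hsq : 2 * (2 * (1 - cos u) + 2 * (1 - cos v) - (1 - cos (u + v))) =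
      (2 - cos u - cos v) ^ 2 + (sin u - sin v) ^ 2 := by
    rw [cos_add]
    linear_combination -sin_sq_add_cos_sq u - sin_sq_add_cos_sq v
  linarith [sq_nonneg (2 - cos u - cos v), sq_nonneg (sin u - sin v)]

namespace IsJumpRate

lemma mul_one_sub_cos_nonneg (ha : IsJumpRate a) (z : Fin d → ℤ) (θ : Fin d → ℝ) :
    0 ≤ a z * (1 - cos (latticePairing z θ)) := by
  rcases eq_or_ne z 0 with rfl | hz
  · simp
  · exact mul_nonneg (ha.nonneg z hz) (sub_nonneg.2 (cos_le_one _))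

lemma hasSum_neg_phiSymb (ha : IsJumpRate a) (θ : Fin d → ℝ) :
    HasSum (fun z => a z * (1 - cos (latticePairing z θ))) (-phiSymb d a θ) := by
  have hcos : Summable fun z => a z * cos (latticePairing z θ) :=
    .of_norm_bounded ha.hasSum_zero.summable.abs fun _ => norm_mul_cos_le _ _
  have hsub : HasSum (fun z => a z - a z * cos (latticePairing z θ)) (0 - phiSymb d a θ) :=
    ha.hasSum_zero.sub hcos.hasSum
  simpa only [mul_sub, mul_one, zero_sub] using hsub

lemma measurable_phiSymb (ha : IsJumpRate a) : Measurable (phiSymb d a) :=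
  (continuous_phiSymb ha.hasSum_zero.summable).measurable

lemma phiSymb_nonpos (ha : IsJumpRate a) (θ : Fin d → ℝ) : phiSymb d a θ ≤ 0 :=
  neg_nonneg.1 ((ha.hasSum_neg_phiSymb θ).nonneg fun z => ha.mul_one_sub_cos_nonneg z θ)

lemma isBigO_one_sub_cos_phiSymb (ha : IsJumpRate a) {w : Fin d → ℤ}
    (hw : w ∈ AddSubgroup.closure {z | 0 < a z}) :
    (fun θ => 1 - cos (latticePairing w θ)) =O[⊤] phiSymb d a := by
  induction hw using AddSubgroup.closure_induction with
  | mem z hz =>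
    refine (isBigO_const_mul_left_iff (ne_of_gt hz)).1 (isBigO_of_le _ fun θ => ?_)
    rw [Real.norm_of_nonneg (ha.mul_one_sub_cos_nonneg z θ),
      Real.norm_of_nonpos (ha.phiSymb_nonpos θ)]
    exact le_hasSum (ha.hasSum_neg_phiSymb θ) z fun j _ => ha.mul_one_sub_cos_nonneg j θ
  | zero => simpa using isBigO_zero (E' := ℝ) (phiSymb d a) ⊤
  | add u v _ _ hu hv =>
    refine (isBigO_of_le _ fun θ => ?_).trans ((hu.const_mul_left 2).add (hv.const_mul_left 2))
    rw [Real.norm_of_nonneg (sub_nonneg.2 (cos_le_one _)), latticePairing_add]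
    exact (one_sub_cos_add_le _ _).trans (le_norm_self _)
  | neg u _ hu => simpa only [latticePairing_neg, cos_neg] using hu

lemma isBigO_phiSymb_norm_sq (ha : IsJumpRate a)
    (hvar : Summable fun z : Fin d → ℤ => (∑ i, (z i : ℝ) ^ 2) * a z) :
    phiSymb d a =O[⊤] fun θ => ‖θ‖ ^ 2 := by
  refine isBigO_top.2 ⟨(∑' z : Fin d → ℤ, (∑ i, (z i : ℝ) ^ 2) * a z) * d, fun θ => ?_⟩
  rw [Real.norm_of_nonpos (ha.phiSymb_nonpos θ), norm_pow, norm_norm, mul_assoc]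
  refine hasSum_le (fun z => ?_) (ha.hasSum_neg_phiSymb θ) (hvar.hasSum.mul_right _)
  rcases eq_or_ne z 0 with rfl | hz
  · simp
  · have hcos : 1 - cos (latticePairing z θ) ≤ (∑ i, (z i : ℝ) ^ 2) * (d * ‖θ‖ ^ 2) := by
      linarith [one_sub_sq_div_two_le_cos (x := latticePairing z θ), sq_latticePairing_le z θ,
        sq_nonneg (latticePairing z θ)]
    calc a z * (1 - cos (latticePairing z θ))
        ≤ a z * ((∑ i, (z i : ℝ) ^ 2) * (d * ‖θ‖ ^ 2)) :=
          mul_le_mul_of_nonneg_left hcos (ha.nonneg z hz)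
      _ = (∑ i, (z i : ℝ) ^ 2) * a z * (d * ‖θ‖ ^ 2) := by ring

end IsJumpRate

end Symbol

section GreenFunction

variable {d : ℕ} {a : (Fin d → ℤ) → ℝ}

lemma integrableOn_cos_latticePairing (w : Fin d → ℤ) :
    IntegrableOn (fun θ => cos (latticePairing w θ)) (brillouinZone d) :=
  (Continuous.continuousOn (by fun_prop)).integrableOn_compact isCompact_Icc

/-- The potential kernel `(2π)^{-d} ∫_{[-π,π]^d} (1 - cos ⟨w, θ⟩) / (-φ(θ)) dθ`, which is
`ρ_d(w) / a` for `w ≠ 0` but, unlike `ρ_d`, vanishes at `w = 0`. -/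
noncomputable def potentialKernel (d : ℕ) (a : (Fin d → ℤ) → ℝ) (w : Fin d → ℤ) : ℝ :=
  ((2 * π) ^ d)⁻¹ *
    ∫ θ in brillouinZone d, (1 - cos (latticePairing w θ)) / -phiSymb d a θ

lemma rhoConst_eq_mul_potentialKernel {w : Fin d → ℤ} (hw : w ≠ 0) :
    rhoConst d a w = -a 0 * potentialKernel d a w := by
  have hneg (θ : Fin d → ℝ) : (cos (latticePairing w θ) - 1) / phiSymb d a θ =
      (1 - cos (latticePairing w θ)) / -phiSymb d a θ := by
    rw [← neg_div_neg_eq, neg_sub]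
  simp only [potentialKernel, ← hneg]
  rw [rhoConst, if_neg hw, div_eq_mul_inv, mul_assoc]
  rfl

namespace IsJumpRate

lemma Glam_eq_integral (ha : IsJumpRate a) {lam : ℝ} (hlam : 0 < lam) (x y : Fin d → ℤ) :
    Glam d a lam x y = ((2 * π) ^ d)⁻¹ *
      ∫ θ in brillouinZone d, cos (latticePairing (y - x) θ) / (lam - phiSymb d a θ) := by
  have hpair (θ : Fin d → ℝ) :
      ∑ i, θ i * ((y i : ℝ) - (x i : ℝ)) = latticePairing (y - x) θ := by
    simp [latticePairing, mul_comm]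
  rw [← integral_exp_neg_mul_integral_exp_mul ha.measurable_phiSymb ha.phiSymb_nonpos
    (integrableOn_cos_latticePairing (y - x)) hlam, ← integral_const_mul]
  simp only [Glam, ptrans, hpair, mul_left_comm]

lemma Glam_zero_zero_eq_integral (ha : IsJumpRate a) {lam : ℝ} (hlam : 0 < lam) :
    Glam d a lam 0 0 = ((2 * π) ^ d)⁻¹ * ∫ θ in brillouinZone d, 1 / (lam - phiSymb d a θ) := by
  simp [ha.Glam_eq_integral hlam]

lemma Glam_sub_Glam_eq_integral (ha : IsJumpRate a) {lam : ℝ} (hlam : 0 < lam)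
    (x y : Fin d → ℤ) :
    Glam d a lam 0 0 - Glam d a lam x y = ((2 * π) ^ d)⁻¹ *
      ∫ θ in brillouinZone d, (1 - cos (latticePairing (y - x) θ)) / (lam - phiSymb d a θ) := by
  rw [ha.Glam_zero_zero_eq_integral hlam, ha.Glam_eq_integral hlam, ← mul_sub, ← integral_sub]
  · simp only [sub_div]
  · exact integrable_div_sub_of_nonpos ha.measurable_phiSymb ha.phiSymb_nonpos
      (integrable_const 1) hlam
  · exact integrable_div_sub_of_nonpos ha.measurable_phiSymb ha.phiSymb_nonpos
      (integrableOn_cos_latticePairing _) hlam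

lemma integrableOn_one_sub_cos_div_neg_phiSymb (ha : IsJumpRate a) {w : Fin d → ℤ}
    (hw : w ∈ AddSubgroup.closure {z | 0 < a z}) :
    IntegrableOn (fun θ => (1 - cos (latticePairing w θ)) / -phiSymb d a θ)
      (brillouinZone d) := by
  obtain ⟨C, hC⟩ :=
    div_isBoundedUnder_of_isBigO (ha.isBigO_one_sub_cos_phiSymb hw).neg_right
  refine Integrable.of_bound (Measurable.aestronglyMeasurable ?_) C
    (ae_of_all _ (eventually_top.1 (eventually_map.1 hC)))
  exact (Continuous.measurable (by fun_prop)).div ha.measurable_phiSymb.neg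

lemma tendsto_Glam_sub_Glam (ha : IsJumpRate a) {x y : Fin d → ℤ}
    (hxy : y - x ∈ AddSubgroup.closure {z | 0 < a z}) :
    Tendsto (fun lam => Glam d a lam 0 0 - Glam d a lam x y) (𝓝[>] 0)
      (𝓝 (potentialKernel d a (y - x))) := by
  have hzero (θ : Fin d → ℝ) (hθ : phiSymb d a θ = 0) : 1 - cos (latticePairing (y - x) θ) = 0 :=
    eventually_top.1 (ha.isBigO_one_sub_cos_phiSymb hxy).eq_zero_imp θ hθ
  refine ((tendsto_integral_div_sub ha.measurable_phiSymb ha.phiSymb_nonpos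
    (Continuous.aestronglyMeasurable (by fun_prop)) hzero
    (ha.integrableOn_one_sub_cos_div_neg_phiSymb hxy)).const_mul _).congr' ?_
  filter_upwards [self_mem_nhdsWithin] with lam hlam
  exact (ha.Glam_sub_Glam_eq_integral hlam x y).symm

lemma potentialKernel_pos (ha : IsJumpRate a) {w : Fin d → ℤ}
    (hw : w ∈ AddSubgroup.closure {z | 0 < a z}) (hw0 : w ≠ 0) :
    0 < potentialKernel d a w := by
  have hnonneg (θ : Fin d → ℝ) : 0 ≤ (1 - cos (latticePairing w θ)) / -phiSymb d a θ :=
    div_nonneg (sub_nonneg.2 (cos_le_one _)) (neg_nonneg.2 (ha.phiSymb_nonpos θ))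
  refine mul_pos (by positivity) ?_
  rw [integral_pos_iff_support_of_nonneg hnonneg (ha.integrableOn_one_sub_cos_div_neg_phiSymb hw),
    Measure.restrict_apply' measurableSet_Icc]
  refine (volume_brillouinZone_cos_latticePairing_lt_one_pos hw0).trans_le
    (measure_mono (Set.inter_subset_inter_left _ fun θ hθ => ?_))
  have hcos : 1 - cos (latticePairing w θ) ≠ 0 := (sub_pos.2 (Set.mem_ofPred.1 hθ)).ne'
  have hphi : phiSymb d a θ ≠ 0 := fun h0 =>
    hcos (eventually_top.1 (ha.isBigO_one_sub_cos_phiSymb hw).eq_zero_imp θ h0)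
  exact div_ne_zero hcos (neg_ne_zero.2 hphi)

lemma tendsto_Glam_zero_zero_atTop_of_lintegral_eq_top (ha : IsJumpRate a)
    (htop : ∫⁻ θ in brillouinZone d, (ENNReal.ofReal (-phiSymb d a θ))⁻¹ = ⊤) :
    Tendsto (fun lam => Glam d a lam 0 0) (𝓝[>] 0) atTop := by
  refine ((tendsto_integral_one_div_sub_atTop ha.measurable_phiSymb ha.phiSymb_nonpos
    htop).const_mul_atTop (r := ((2 * π) ^ d)⁻¹) (by positivity)).congr' ?_
  filter_upwards [self_mem_nhdsWithin] with lam hlam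
  exact (ha.Glam_zero_zero_eq_integral hlam).symm

lemma lintegral_inv_neg_phiSymb_eq_top (ha : IsJumpRate a) (hd1 : 1 ≤ d) (hd2 : d ≤ 2)
    (hvar : Summable fun z : Fin d → ℤ => (∑ i, (z i : ℝ) ^ 2) * a z) :
    ∫⁻ θ in brillouinZone d, (ENNReal.ofReal (-phiSymb d a θ))⁻¹ = ⊤ := by
  have : Nonempty (Fin d) := ⟨⟨0, hd1⟩⟩
  obtain ⟨C, hC⟩ := isBigO_top.1 (ha.isBigO_phiSymb_norm_sq hvar)
  have hle (θ : Fin d → ℝ) : ENNReal.ofReal (-phiSymb d a θ) ≤ ENNReal.ofReal C * ‖θ‖ₑ ^ 2 := by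
    rw [← ofReal_norm, ← ENNReal.ofReal_pow (norm_nonneg θ), ← ENNReal.ofReal_mul' (by positivity)]
    exact ENNReal.ofReal_le_ofReal (by simpa [abs_of_nonpos (ha.phiSymb_nonpos θ)] using hC θ)
  have hball : ∫⁻ θ in Metric.ball (0 : Fin d → ℝ) π, (‖θ‖ₑ ^ 2)⁻¹ = ⊤ := by
    simpa using lintegral_ball_inv_enorm_rpow_eq_top (E := Fin d → ℝ) (μ := volume) pi_pos
      (s := 2) (by simpa using hd2)
  refine top_unique ?_
  calc ⊤ = (ENNReal.ofReal C)⁻¹ * ∫⁻ θ in Metric.ball (0 : Fin d → ℝ) π, (‖θ‖ₑ ^ 2)⁻¹ := by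
        rw [hball, ENNReal.mul_top (by simp)]
    _ = ∫⁻ θ in Metric.ball (0 : Fin d → ℝ) π, (ENNReal.ofReal C * ‖θ‖ₑ ^ 2)⁻¹ := by
        rw [← lintegral_const_mul _ (by fun_prop)]
        simp only [ENNReal.mul_inv (.inr (ENNReal.pow_ne_top enorm_ne_top))
          (.inl ENNReal.ofReal_ne_top)]
    _ ≤ ∫⁻ θ in Metric.ball (0 : Fin d → ℝ) π, (ENNReal.ofReal (-phiSymb d a θ))⁻¹ :=
        lintegral_mono fun θ => ENNReal.inv_le_inv.2 (hle θ)
    _ ≤ ∫⁻ θ in brillouinZone d, (ENNReal.ofReal (-phiSymb d a θ))⁻¹ :=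
        lintegral_mono_set ball_zero_pi_subset_brillouinZone

end IsJumpRate

end GreenFunction

lemma tendsto_taboo_quotient {𝕜 ι : Type*} [Field 𝕜] [LinearOrder 𝕜] [IsStrictOrderedRing 𝕜]
    [TopologicalSpace 𝕜] [OrderTopology 𝕜] {l : Filter ι} {g p q s : ι → 𝕜} {P Q S : 𝕜}
    (hg : Tendsto g l atTop) (hp : Tendsto p l (𝓝 P)) (hq : Tendsto q l (𝓝 Q))
    (hs : Tendsto s l (𝓝 S)) (hQ : Q ≠ 0) :
    Tendsto (fun n => ((g n - s n) * g n - (g n - p n) * (g n - q n)) /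
      (g n ^ 2 - (g n - q n) ^ 2)) l (𝓝 ((P + Q - S) / (2 * Q))) := by
  have hinv : Tendsto (fun n => (g n)⁻¹) l (𝓝 0) := hg.inv_tendsto_atTop
  have hnum : Tendsto (fun n => p n + q n - s n - p n * q n * (g n)⁻¹) l (𝓝 (P + Q - S)) := by
    simpa using ((hp.add hq).sub hs).sub ((hp.mul hq).mul hinv)
  have hden : Tendsto (fun n => (2 - q n * (g n)⁻¹) * q n) l (𝓝 (2 * Q)) := by
    simpa using ((hq.mul hinv).const_sub 2).mul hq
  refine (hnum.div hden (mul_ne_zero two_ne_zero hQ)).congr' ?_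
  filter_upwards [hg.eventually_gt_atTop 0] with n hn
  have hgn := hn.ne'
  rw [Pi.div_apply, ← mul_div_mul_left _ _ hgn]
  congr 1 <;> field_simp <;> ring

theorem taboo_total_mass_low_dim_general {d : ℕ} {a : (Fin d → ℤ) → ℝ} (ha : IsJumpRate a)
    (hneg : a 0 < 0) (hrec : Tendsto (fun lam => Glam d a lam 0 0) (𝓝[>] 0) atTop)
    {x y : Fin d → ℤ} (hxmem : x ∈ AddSubgroup.closure {z | 0 < a z})
    (hymem : y ∈ AddSubgroup.closure {z | 0 < a z}) (hx : x ≠ 0) (hy : y ≠ 0) (hxy : x ≠ y) :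
    Tendsto (fun lam : ℝ =>
        (Glam d a lam x y * Glam d a lam 0 0 - Glam d a lam 0 x * Glam d a lam 0 y) /
          ((Glam d a lam 0 0) ^ 2 - (Glam d a lam 0 y) ^ 2))
      (𝓝[>] (0 : ℝ))
      (𝓝 ((rhoConst d a x + rhoConst d a y - rhoConst d a (y - x)) /
        (2 * rhoConst d a y))) := by
  have hlim := tendsto_taboo_quotient hrec
    (ha.tendsto_Glam_sub_Glam (x := 0) (y := x) (by simpa using hxmem))
    (ha.tendsto_Glam_sub_Glam (x := 0) (y := y) (by simpa using hymem))
    (ha.tendsto_Glam_sub_Glam (sub_mem hymem hxmem))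
    (by simpa using (ha.potentialKernel_pos hymem hy).ne')
  simp only [sub_sub_cancel, sub_zero] at hlim
  rwa [rhoConst_eq_mul_potentialKernel hx, rhoConst_eq_mul_potentialKernel hy,
    rhoConst_eq_mul_potentialKernel (sub_ne_zero.2 hxy.symm), ← mul_add, ← mul_sub,
    mul_left_comm, mul_div_mul_left _ _ (neg_ne_zero.2 hneg.ne)]

/-- For `d ∈ {1,2}` and `x, y ≠ 0`, `x ≠ y`, the Laplace–Stieltjes transform of the taboo
hitting time converges as `λ → 0+` to `(ρ_d(x) + ρ_d(y) - ρ_d(y-x))/(2ρ_d(y))`. -/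
theorem taboo_total_mass_low_dim
    (d : ℕ) (hd : 1 ≤ d) (a : (Fin d → ℤ) → ℝ)
    (hpos : ∀ z : Fin d → ℤ, z ≠ 0 → 0 ≤ a z)
    (hneg : a 0 < 0)
    (hsymm : ∀ z : Fin d → ℤ, a (-z) = a z)
    (hsum : HasSum a 0)
    (hvar : Summable fun z : Fin d → ℤ => (∑ i, ((z i : ℝ)) ^ 2) * a z)
    (hirr : AddSubgroup.closure {z : Fin d → ℤ | 0 < a z} = ⊤)
    (hd12 : d = 1 ∨ d = 2) (x y : Fin d → ℤ) (hy : y ≠ 0) (hx : x ≠ 0) (hxy : x ≠ y) :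
    Tendsto (fun lam : ℝ =>
        (Glam d a lam x y * Glam d a lam 0 0 - Glam d a lam 0 x * Glam d a lam 0 y) /
          ((Glam d a lam 0 0) ^ 2 - (Glam d a lam 0 y) ^ 2))
      (𝓝[>] (0 : ℝ))
      (𝓝 ((rhoConst d a x + rhoConst d a y - rhoConst d a (y - x)) /
        (2 * rhoConst d a y))) := by
  have ha : IsJumpRate a := ⟨hpos, hsum⟩
  have hrec := ha.tendsto_Glam_zero_zero_atTop_of_lintegral_eq_top
    (ha.lintegral_inv_neg_phiSymb_eq_top hd (by lia) hvar)
  exact taboo_total_mass_low_dim_general ha hneg hrec (hirr ▸ AddSubgroup.mem_top x)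
    (hirr ▸ AddSubgroup.mem_top y) hx hy hxy
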